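/- Let F ∈ ℂ[x,y,s,t] be an irreducible polynomial of total degree δ such that none of F_x, F_y, F_s, F_t is identically zero, and let 𝒯, 𝒮 be its exceptional sets. Let 𝒯' ⊇ 𝒯 and 𝒮' ⊇ 𝒮 be subsets of ℂ², each the union of an algebraic curve of degree at most D and a finite set of at most δ² points. Let A, B, C, D₀ ⊂ ℂ be finite sets, set Π := (A×B)\𝒮' and let Γ be the multiset {γ_{c,d} : (c,d) ∈ (C×D₀)\𝒯'}. Then |Z(F) ∩ (A×B×C×D₀)| ≤ I(Π,Γ) + c·(|A||B| + |C||D₀| + |A||C| + |A||D₀| + |B||C| + |B||D₀|), where c is a constant depending only (polynomially) on δ and D, and I(Π,Γ) denotes the number of incidences between Π and Γ counted with the multiplicity of the curves. -/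

import Mathlib

open MvPolynomial

noncomputable section

attribute [local instance] Classical.propDecidable

def ev4 (F : MvPolynomial (Fin 4) ℂ) (x y s t : ℂ) : ℂ := eval ![x, y, s, t] F

def ev2 (g : MvPolynomial (Fin 2) ℂ) (p : ℂ × ℂ) : ℂ := eval ![p.1, p.2] g

def TT (F : MvPolynomial (Fin 4) ℂ) : Set (ℂ × ℂ) :=
  {q : ℂ × ℂ | ∀ x y : ℂ, ev4 F x y q.1 q.2 = 0}

def SS (F : MvPolynomial (Fin 4) ℂ) : Set (ℂ × ℂ) :=
  {p : ℂ × ℂ | ∀ s t : ℂ, ev4 F p.1 p.2 s t = 0}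

/-- `X` is the union of an algebraic curve of degree at most `D` and at most `k` points. -/
def IsCurvePlusPoints (X : Set (ℂ × ℂ)) (D k : ℕ) : Prop :=
  ∃ (g : MvPolynomial (Fin 2) ℂ) (P : Finset (ℂ × ℂ)), g ≠ 0 ∧ g.totalDegree ≤ D ∧
    P.card ≤ k ∧ X = {p : ℂ × ℂ | ev2 g p = 0} ∪ ↑P


section Elimination

open Polynomial in
/-- By Gauss's lemma, an irreducible polynomial of positive degree over a GCD domain has nonzero
resultant with every polynomial that it does not divide. -/
lemma resultant_ne_zero_of_irreducible_of_not_dvd {R : Type*} [CommRing R] [IsDomain R]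
    [IsGCDMonoid R] {P Q : R[X]} (hP : Irreducible P) (h0 : P.natDegree ≠ 0) (hPQ : ¬ P ∣ Q) :
    P.resultant Q ≠ 0 := by
  have hprim : P.IsPrimitive := hP.isPrimitive h0
  let φ := algebraMap R (FractionRing R)
  have hφ : Function.Injective φ := IsFractionRing.injective _ _
  have hirr : Irreducible (P.map φ) :=
    hprim.irreducible_iff_irreducible_map_fraction_map.1 hP
  have hndvd : ¬ P.map φ ∣ Q.map φ := fun h =>
    hPQ ((hprim.dvd_iff_fraction_map_dvd_fraction_map (FractionRing R)).2 h)
  have hcop : IsCoprime (P.map φ) (Q.map φ) := hirr.coprime_iff_not_dvd.2 hndvd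
  intro h
  apply resultant_ne_zero _ _ hcop
  rw [natDegree_map_eq_of_injective hφ, natDegree_map_eq_of_injective hφ, resultant_map_map, h,
    map_zero]

open Polynomial in
/-- The total degree of a resultant is bounded in terms of the total degrees of the coefficients. -/
lemma totalDegree_resultant_le {σ : Type*} (f g : (MvPolynomial σ ℂ)[X]) (m n d : ℕ)
    (hf : ∀ i, (f.coeff i).totalDegree ≤ d) (hg : ∀ i, (g.coeff i).totalDegree ≤ d) :
    (f.resultant g m n).totalDegree ≤ (m + n) * d := by
  rw [resultant, Matrix.det_apply]
  refine totalDegree_finsetSum_le fun τ _ => ?_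
  have hprod : (∏ i, f.sylvester g m n (τ i) i).totalDegree ≤ (m + n) * d := by
    refine (totalDegree_finsetProd _ _).trans ?_
    refine (Finset.sum_le_card_nsmul _ _ d fun j _ => ?_).trans (by simp)
    generalize τ j = i
    induction j using Fin.addCases <;> simp only [sylvester, Matrix.of_apply,
      Fin.addCases_left, Fin.addCases_right] <;> split_ifs <;> simp [hf, hg]
  rcases Int.units_eq_one_or (Equiv.Perm.sign τ) with h | h <;> simpa [h] using hprod

lemma totalDegree_coeff_finSuccEquiv_le {n : ℕ} (f : MvPolynomial (Fin (n + 1)) ℂ) (i : ℕ) :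
    ((finSuccEquiv ℂ n f).coeff i).totalDegree ≤ f.totalDegree := by
  by_cases h : (finSuccEquiv ℂ n f).coeff i = 0
  · simp [h]
  · have := totalDegree_coeff_finSuccEquiv_add_le f i h
    omega

lemma natDegree_finSuccEquiv_le_totalDegree {n : ℕ} (f : MvPolynomial (Fin (n + 1)) ℂ) :
    (finSuccEquiv ℂ n f).natDegree ≤ f.totalDegree := by
  rw [natDegree_finSuccEquiv]
  exact degreeOf_le_totalDegree f 0

lemma eval_eq_eval_map_finSuccEquiv {n : ℕ} (v : Fin (n + 1) → ℂ)
    (f : MvPolynomial (Fin (n + 1)) ℂ) :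
    eval v f = ((finSuccEquiv ℂ n f).map (eval (Fin.tail v))).eval (v 0) := by
  rw [← eval_eq_eval_mv_eval', Fin.cons_self_tail]

/-- Elimination of the first variable from an irreducible polynomial and a polynomial that it does
not divide. -/
lemma exists_eliminant {n : ℕ} {p f : MvPolynomial (Fin (n + 1)) ℂ} {d : ℕ} (hp : Irreducible p)
    (hpf : ¬ p ∣ f) (hpd : p.totalDegree ≤ d) (hfd : f.totalDegree ≤ d) :
    ∃ r : MvPolynomial (Fin n) ℂ, r ≠ 0 ∧ r.totalDegree ≤ d + 2 * d * d ∧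
      ∀ v, eval v p = 0 → eval v f = 0 → eval (Fin.tail v) r = 0 := by
  set P := finSuccEquiv ℂ n p with hP
  set Q := finSuccEquiv ℂ n f with hQ
  have hPirr : Irreducible P := (MulEquiv.irreducible_iff (finSuccEquiv ℂ n)).2 hp
  have hPQ : ¬ P ∣ Q := fun h => hpf ((map_dvd_iff (finSuccEquiv ℂ n)).1 h)
  by_cases h0 : P.natDegree = 0
  · refine ⟨P.coeff 0, ?_, ?_, ?_⟩
    · intro h
      apply hPirr.ne_zero
      rw [Polynomial.eq_C_of_natDegree_eq_zero h0, h, map_zero]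
    · exact (totalDegree_coeff_finSuccEquiv_le p 0).trans (hpd.trans (by omega))
    · intro v hv _
      rw [eval_eq_eval_map_finSuccEquiv, ← hP, Polynomial.eq_C_of_natDegree_eq_zero h0] at hv
      simpa using hv
  · refine ⟨P.resultant Q P.natDegree Q.natDegree, ?_, ?_, ?_⟩
    · exact resultant_ne_zero_of_irreducible_of_not_dvd hPirr h0 hPQ
    · refine (totalDegree_resultant_le P Q _ _ d
        (fun i => (totalDegree_coeff_finSuccEquiv_le p i).trans hpd)
        (fun i => (totalDegree_coeff_finSuccEquiv_le f i).trans hfd)).trans ?_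
      have h1 : P.natDegree ≤ d := (natDegree_finSuccEquiv_le_totalDegree p).trans hpd
      have h2 : Q.natDegree ≤ d := (natDegree_finSuccEquiv_le_totalDegree f).trans hfd
      calc (P.natDegree + Q.natDegree) * d ≤ (2 * d) * d := Nat.mul_le_mul_right _ (by omega)
        _ ≤ _ := Nat.le_add_left _ _
    · intro v hv hv'
      obtain ⟨a, b, -, -, hab⟩ := Polynomial.exists_mul_add_mul_eq_C_resultant
        P Q le_rfl le_rfl (Or.inl h0)
      rw [eval_eq_eval_map_finSuccEquiv] at hv hv'
      have := congrArg (fun R => (R.map (eval (Fin.tail v))).eval (v 0)) hab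
      simp only [Polynomial.map_add, Polynomial.map_mul, Polynomial.eval_add, Polynomial.eval_mul,
        Polynomial.map_C, Polynomial.eval_C, ← hP, ← hQ] at this hv hv'
      rw [← this, hv, hv']
      simp

/-- A nonzero polynomial in one variable has at most as many zeros as its degree. -/
lemma card_le_of_eval_fin_one_eq_zero {r : MvPolynomial (Fin 1) ℂ} {d : ℕ} (hr : r ≠ 0)
    (hd : r.totalDegree ≤ d) (X : Finset ℂ) (hX : ∀ x ∈ X, eval ![x] r = 0) : X.card ≤ d := by
  rcases X.eq_empty_or_nonempty with rfl | hne
  · simp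
  have h := schwartz_zippel_totalDegree hr X
  have hfilter : (Fintype.piFinset fun _ : Fin 1 => X).filter (fun v => eval v r = 0) =
      Fintype.piFinset fun _ : Fin 1 => X := by
    refine Finset.filter_true_of_mem fun v hv => ?_
    have : v = ![v 0] := by ext i; fin_cases i; rfl
    rw [this]
    exact hX _ (Fintype.mem_piFinset.1 hv 0)
  have hpos : (0 : ℚ≥0) < X.card := by exact_mod_cast hne.card_pos
  rw [hfilter, Fintype.card_piFinset_const, pow_one, pow_one,
    div_le_div_iff_of_pos_right hpos] at h
  exact le_trans (by exact_mod_cast h) hd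

/-- A weak form of Bézout's theorem: a bound on the number of common zeros in the plane. -/
lemma card_common_zeros_le {p f : MvPolynomial (Fin 2) ℂ} {d : ℕ} (hp : Irreducible p)
    (hpf : ¬ p ∣ f) (hpd : p.totalDegree ≤ d) (hfd : f.totalDegree ≤ d)
    (X : Finset (ℂ × ℂ)) (hX : ∀ q ∈ X, ev2 p q = 0 ∧ ev2 f q = 0) :
    X.card ≤ (d + 2 * d * d) ^ 2 := by
  obtain ⟨r, hr, hrd, hrv⟩ := exists_eliminant hp hpf hpd hfd
  let σ := renameEquiv ℂ (Equiv.swap (0 : Fin 2) 1)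
  have hσ : ∀ (g : MvPolynomial (Fin 2) ℂ) (q : ℂ × ℂ), eval ![q.2, q.1] (σ g) = ev2 g q := by
    intro g q
    simp only [σ, renameEquiv_apply, eval_rename, ev2]
    congr 1
    congr 1
    ext i
    fin_cases i <;> simp
  have hσd : ∀ g : MvPolynomial (Fin 2) ℂ, (σ g).totalDegree = g.totalDegree := fun g =>
    totalDegree_renameEquiv _ _
  obtain ⟨s, hs, hsd, hsv⟩ := exists_eliminant (p := σ p) (f := σ f) (d := d)
    ((MulEquiv.irreducible_iff σ).2 hp) (fun h => hpf ((map_dvd_iff σ).1 h))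
    ((hσd p).trans_le hpd) ((hσd f).trans_le hfd)
  have h2 : (X.image Prod.snd).card ≤ d + 2 * d * d := by
    refine card_le_of_eval_fin_one_eq_zero hr hrd _ fun y hy => ?_
    obtain ⟨q, hq, rfl⟩ := Finset.mem_image.1 hy
    simpa [Fin.tail] using hrv ![q.1, q.2] (hX q hq).1 (hX q hq).2
  have h1 : (X.image Prod.fst).card ≤ d + 2 * d * d := by
    refine card_le_of_eval_fin_one_eq_zero hs hsd _ fun y hy => ?_
    obtain ⟨q, hq, rfl⟩ := Finset.mem_image.1 hy
    exact hsv ![q.2, q.1] ((hσ p q).trans (hX q hq).1) ((hσ f q).trans (hX q hq).2)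
  calc X.card ≤ (X.image Prod.fst ×ˢ X.image Prod.snd).card :=
        Finset.card_le_card Finset.subset_product
    _ ≤ (d + 2 * d * d) ^ 2 := by
        rw [Finset.card_product, sq]
        exact Nat.mul_le_mul h1 h2

/-- Iterating over the irreducible factors of `g`: the common zeros of `g` and of a family of
polynomials without common irreducible factor. -/
lemma card_zeros_inter_le {J : Set (MvPolynomial (Fin 2) ℂ)} {d : ℕ}
    (hJd : ∀ f ∈ J, f.totalDegree ≤ d)
    (hJ : ∀ p : MvPolynomial (Fin 2) ℂ, Irreducible p → ∃ f ∈ J, ¬ p ∣ f)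
    (g : MvPolynomial (Fin 2) ℂ) :
    g ≠ 0 → g.totalDegree ≤ d →
    ∀ X : Finset (ℂ × ℂ), (∀ q ∈ X, ev2 g q = 0 ∧ ∀ f ∈ J, ev2 f q = 0) →
    X.card ≤ g.totalDegree * (d + 2 * d * d) ^ 2 := by
  induction g using WfDvdMonoid.induction_on_irreducible with
  | zero => exact fun h => absurd rfl h
  | unit u hu =>
    intro _ _ X hX
    have : X = ∅ := Finset.eq_empty_of_forall_notMem fun q hq =>
      (hu.map (eval ![q.1, q.2])).ne_zero (hX q hq).1
    simp [this]
  | mul a p ha hp ih =>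
    intro _ hd X hX
    have hdeg : (p * a).totalDegree = p.totalDegree + a.totalDegree :=
      totalDegree_mul_of_isDomain hp.ne_zero ha
    have hp1 : 1 ≤ p.totalDegree := by
      by_contra h
      have h0 : p.totalDegree = 0 := by omega
      rw [totalDegree_eq_zero_iff_eq_C] at h0
      apply hp.not_isUnit
      rw [h0]
      refine IsUnit.map C (isUnit_iff_ne_zero.2 fun hc => hp.ne_zero ?_)
      rw [h0, hc, map_zero]
    obtain ⟨f, hfJ, hpf⟩ := hJ p hp
    have h1 : (X.filter fun q => ev2 p q = 0).card ≤ (d + 2 * d * d) ^ 2 :=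
      card_common_zeros_le hp hpf (by omega) (hJd f hfJ) _ fun q hq => by
        rw [Finset.mem_filter] at hq
        exact ⟨hq.2, (hX q hq.1).2 f hfJ⟩
    have h2 : (X.filter fun q => ev2 p q ≠ 0).card ≤ a.totalDegree * (d + 2 * d * d) ^ 2 :=
      ih ha (by omega) _ fun q hq => by
        rw [Finset.mem_filter] at hq
        have h := (hX q hq.1).1
        rw [ev2, map_mul] at h
        exact ⟨(mul_eq_zero.1 h).resolve_left hq.2, (hX q hq.1).2⟩
    rw [← Finset.card_filter_add_card_filter_not (s := X) (fun q => ev2 p q = 0), hdeg, add_mul]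
    exact Nat.add_le_add (h1.trans (Nat.le_mul_of_pos_left _ hp1)) h2

end Elimination

section ExceptionalSets

lemma eval_coeff_finSuccEquiv_eq_zero {n : ℕ} {f : MvPolynomial (Fin (n + 1)) ℂ} {s : Fin n → ℂ}
    (h : ∀ x : ℂ, eval (Fin.cons x s : Fin (n + 1) → ℂ) f = 0) (i : ℕ) :
    eval s ((finSuccEquiv ℂ n f).coeff i) = 0 := by
  have h0 : (finSuccEquiv ℂ n f).map (eval s) = 0 :=
    Polynomial.funext fun x => by rw [← eval_eq_eval_mv_eval', h x, Polynomial.eval_zero]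
  simpa using congrArg (fun R => R.coeff i) h0

lemma finSuccEquiv_rename_succ {n : ℕ} (p : MvPolynomial (Fin n) ℂ) :
    finSuccEquiv ℂ n (rename Fin.succ p) = Polynomial.C p := by
  induction p using MvPolynomial.induction_on with
  | C a => simp [finSuccEquiv_apply]
  | add a b ha hb => simp [ha, hb]
  | mul_X a i ha => rw [map_mul, map_mul, ha, rename_X, finSuccEquiv_X_succ, map_mul]

lemma rename_succ_dvd {n : ℕ} {f : MvPolynomial (Fin (n + 1)) ℂ} {p : MvPolynomial (Fin n) ℂ}
    (h : ∀ i, p ∣ (finSuccEquiv ℂ n f).coeff i) : rename Fin.succ p ∣ f := by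
  rw [← map_dvd_iff (finSuccEquiv ℂ n), finSuccEquiv_rename_succ,
    Polynomial.C_dvd_iff_dvd_coeff]
  exact h

/-- The coefficients of `F`, seen as a polynomial in the first two variables. -/
def innerCoeff (F : MvPolynomial (Fin 4) ℂ) (i j : ℕ) : MvPolynomial (Fin 2) ℂ :=
  (finSuccEquiv ℂ 2 ((finSuccEquiv ℂ 3 F).coeff i)).coeff j

lemma totalDegree_innerCoeff_le (F : MvPolynomial (Fin 4) ℂ) (i j : ℕ) :
    (innerCoeff F i j).totalDegree ≤ F.totalDegree :=
  (totalDegree_coeff_finSuccEquiv_le _ j).trans (totalDegree_coeff_finSuccEquiv_le F i)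

lemma ev2_innerCoeff_eq_zero {F : MvPolynomial (Fin 4) ℂ} {q : ℂ × ℂ} (hq : q ∈ TT F) (i j : ℕ) :
    ev2 (innerCoeff F i j) q = 0 :=
  eval_coeff_finSuccEquiv_eq_zero
    (fun y => eval_coeff_finSuccEquiv_eq_zero (fun x => hq x y) i) j

lemma exists_not_dvd_innerCoeff {F : MvPolynomial (Fin 4) ℂ} (hF : Irreducible F)
    (hF0 : pderiv 0 F ≠ 0) {p : MvPolynomial (Fin 2) ℂ} (hp : Irreducible p) :
    ∃ i j, ¬ p ∣ innerCoeff F i j := by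
  by_contra! h
  have hdvd : rename Fin.succ (rename Fin.succ p) ∣ F :=
    rename_succ_dvd fun i => rename_succ_dvd fun j => h i j
  have hinj : Function.Injective (rename (R := ℂ) (Fin.succ ∘ Fin.succ : Fin 2 → Fin 4)) :=
    rename_injective _ ((Fin.succ_injective _).comp (Fin.succ_injective _))
  rw [rename_rename] at hdvd
  set P := rename (Fin.succ ∘ Fin.succ) p with hP
  have hPder : pderiv 0 P = 0 := by
    refine pderiv_eq_zero_of_notMem_vars fun h0 => ?_
    obtain ⟨i, -, hi⟩ := Finset.mem_image.1 (vars_rename _ p h0)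
    exact Fin.succ_ne_zero _ hi
  have hPunit : ¬ IsUnit P := by
    intro hu
    obtain ⟨c, hc, hPc⟩ := isUnit_iff_eq_C_of_isReduced.1 hu
    refine hp.not_isUnit (isUnit_iff_eq_C_of_isReduced.2 ⟨c, hc, hinj ?_⟩)
    rw [rename_C]
    exact hPc
  obtain ⟨u, hu⟩ := hdvd
  have huu : IsUnit u := (hF.isUnit_or_isUnit hu).resolve_left hPunit
  obtain ⟨c, -, rfl⟩ := isUnit_iff_eq_C_of_isReduced.1 huu
  exact hF0 (by rw [hu, pderiv_mul, hPder, pderiv_C]; simp)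

/-- The exceptional set of an irreducible polynomial has boundedly many points. -/
lemma card_le_of_subset_TT {F : MvPolynomial (Fin 4) ℂ} (hF : Irreducible F)
    (hF0 : pderiv 0 F ≠ 0) (X : Finset (ℂ × ℂ)) (hX : ∀ q ∈ X, q ∈ TT F) :
    X.card ≤ F.totalDegree * (F.totalDegree + 2 * F.totalDegree * F.totalDegree) ^ 2 := by
  obtain ⟨i, j, hij⟩ := exists_not_dvd_innerCoeff hF hF0 ((X_prime (i := (0 : Fin 2))).irreducible)
  have hne : innerCoeff F i j ≠ 0 := fun h => hij (h ▸ dvd_zero _)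
  have hJ := card_zeros_inter_le (J := Set.range fun k : ℕ × ℕ => innerCoeff F k.1 k.2)
    (d := F.totalDegree) (by rintro _ ⟨k, rfl⟩; exact totalDegree_innerCoeff_le F _ _)
    (fun p hp => by
      obtain ⟨k, l, hkl⟩ := exists_not_dvd_innerCoeff hF hF0 hp
      exact ⟨_, ⟨(k, l), rfl⟩, hkl⟩)
    _ hne (totalDegree_innerCoeff_le F i j) X (fun q hq =>
      ⟨ev2_innerCoeff_eq_zero (hX q hq) i j, by
        rintro _ ⟨k, rfl⟩
        exact ev2_innerCoeff_eq_zero (hX q hq) _ _⟩)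
  exact hJ.trans (Nat.mul_le_mul_right _ (totalDegree_innerCoeff_le F i j))

end ExceptionalSets

section Counting

/-- A plane curve of degree at most `d` contains few points of a Cartesian product. -/
lemma card_grid_zeros_le {g : MvPolynomial (Fin 2) ℂ} {d : ℕ} (hg : g ≠ 0)
    (hd : g.totalDegree ≤ d) (A B : Finset ℂ) :
    ((A ×ˢ B).filter fun p => ev2 g p = 0).card ≤ d * (A.card + B.card) := by
  rcases A.eq_empty_or_nonempty with rfl | hA
  · simp
  rcases B.eq_empty_or_nonempty with rfl | hB
  · simp
  have h := schwartz_zippel_sum_degreeOf hg ![A, B]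
  have hcard : ((A ×ˢ B).filter fun p => ev2 g p = 0).card ≤
      ((Fintype.piFinset ![A, B]).filter fun v => eval v g = 0).card := by
    refine Finset.card_le_card_of_injOn (fun p => ![p.1, p.2]) (fun p hp => ?_) ?_
    · simp only [Finset.coe_filter, Finset.mem_product, Set.mem_ofPred_eq] at hp
      simp only [Finset.coe_filter, Fintype.mem_piFinset, Set.mem_ofPred_eq]
      exact ⟨fun i => by fin_cases i; exacts [hp.1.1, hp.1.2], hp.2⟩
    · intro p _ q _ hpq
      exact Prod.ext (congrFun hpq 0) (congrFun hpq 1)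
  have hA0 : (0 : ℚ≥0) < A.card := by exact_mod_cast hA.card_pos
  have hB0 : (0 : ℚ≥0) < B.card := by exact_mod_cast hB.card_pos
  have h0 : (g.degreeOf 0 : ℚ≥0) ≤ d := by exact_mod_cast (degreeOf_le_totalDegree g 0).trans hd
  have h1 : (g.degreeOf 1 : ℚ≥0) ≤ d := by exact_mod_cast (degreeOf_le_totalDegree g 1).trans hd
  simp only [Fin.prod_univ_two, Fin.sum_univ_two, Matrix.cons_val_zero, Matrix.cons_val_one] at h
  rw [div_le_iff₀ (mul_pos hA0 hB0)] at h
  have h2 : ((g.degreeOf 0 / A.card + g.degreeOf 1 / B.card) * (A.card * B.card) : ℚ≥0) =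
      g.degreeOf 0 * B.card + g.degreeOf 1 * A.card := by
    field_simp
  rw [h2] at h
  refine hcard.trans ?_
  have h3 := h.trans (add_le_add (mul_le_mul_left h0 (B.card : ℚ≥0))
    (mul_le_mul_left h1 (A.card : ℚ≥0)))
  have h4 : ((Fintype.piFinset ![A, B]).filter fun v => eval v g = 0).card ≤
      d * B.card + d * A.card := by exact_mod_cast h3
  linarith

lemma totalDegree_aeval_le {σ τ : Type*} (F : MvPolynomial σ ℂ) (f : σ → MvPolynomial τ ℂ)
    (hf : ∀ i, (f i).totalDegree ≤ 1) : (aeval f F).totalDegree ≤ F.totalDegree := by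
  rw [aeval_def, eval₂_eq]
  refine totalDegree_finsetSum_le fun m hm => (totalDegree_mul _ _).trans ?_
  rw [MvPolynomial.algebraMap_eq, totalDegree_C, zero_add]
  refine (totalDegree_finsetProd _ _).trans (le_trans ?_ (le_totalDegree hm))
  refine Finset.sum_le_sum fun i _ => (totalDegree_pow _ _).trans ?_
  exact (Nat.mul_le_mul_left _ (hf i)).trans (by simp)

/-- A curve of the family that is not the whole plane has few points on a Cartesian product. -/
lemma card_grid_fiber_le (F : MvPolynomial (Fin 4) ℂ) {q : ℂ × ℂ} (hq : q ∉ TT F)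
    (A B : Finset ℂ) :
    ((A ×ˢ B).filter fun p => ev4 F p.1 p.2 q.1 q.2 = 0).card ≤
      F.totalDegree * (A.card + B.card) := by
  let g : MvPolynomial (Fin 2) ℂ := aeval ![X 0, X 1, C q.1, C q.2] F
  have hg : ∀ p : ℂ × ℂ, ev2 g p = ev4 F p.1 p.2 q.1 q.2 := by
    intro p
    simp only [g, ev2, ev4, ← coe_aeval_eq_eval, RingHom.coe_coe]
    rw [comp_aeval_apply]
    congr 2
    ext i
    fin_cases i <;> simp
  have hg0 : g ≠ 0 := by
    intro h
    refine hq fun x y => ?_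
    rw [← hg (x, y), h, ev2, map_zero]
  have hgd : g.totalDegree ≤ F.totalDegree :=
    totalDegree_aeval_le F _ fun i => by fin_cases i <;> simp
  simpa only [hg] using card_grid_zeros_le hg0 hgd A B

lemma card_grid_inter_le {T : Set (ℂ × ℂ)} {D k : ℕ} (hT : IsCurvePlusPoints T D k)
    (A B : Finset ℂ) :
    ((A ×ˢ B).filter fun p => p ∈ T).card ≤ (D + k) * (A.card + B.card) := by
  rcases A.eq_empty_or_nonempty with rfl | hA
  · simp
  obtain ⟨g, P, hg, hgd, hP, hT⟩ := hT
  have hsub : ((A ×ˢ B).filter fun p => p ∈ T) ⊆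
      ((A ×ˢ B).filter fun p => ev2 g p = 0) ∪ P := by
    intro p hp
    rw [Finset.mem_filter, hT] at hp
    rw [Finset.mem_union, Finset.mem_filter]
    exact hp.2.imp (fun h => ⟨hp.1, h⟩) id
  have hpos := hA.card_pos
  calc ((A ×ˢ B).filter fun p => p ∈ T).card
      ≤ _ := (Finset.card_le_card hsub).trans (Finset.card_union_le _ _)
    _ ≤ D * (A.card + B.card) + k * (A.card + B.card) :=
      Nat.add_le_add (card_grid_zeros_le hg hgd A B)
        (hP.trans (Nat.le_mul_of_pos_right _ (by omega)))
    _ = (D + k) * (A.card + B.card) := by ring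

/-- The zeros whose last two coordinates lie in the enlarged exceptional set. -/
lemma sum_card_exceptional_le {F : MvPolynomial (Fin 4) ℂ} (hF : Irreducible F)
    (hF0 : pderiv 0 F ≠ 0) {T : Set (ℂ × ℂ)} {D k : ℕ} (hT : IsCurvePlusPoints T D k)
    (A B C D₀ : Finset ℂ) :
    ∑ q ∈ (C ×ˢ D₀).filter (fun q => q ∈ T),
        ((A ×ˢ B).filter fun p => ev4 F p.1 p.2 q.1 q.2 = 0).card ≤
      F.totalDegree * (F.totalDegree + 2 * F.totalDegree * F.totalDegree) ^ 2 *
          (A.card * B.card) +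
        (D + k) * F.totalDegree * ((C.card + D₀.card) * (A.card + B.card)) := by
  rw [← Finset.sum_filter_add_sum_filter_not _ (fun q => q ∈ TT F)]
  refine Nat.add_le_add ?_ ?_
  · refine (Finset.sum_le_card_nsmul _ _ (A.card * B.card) fun q _ => ?_).trans ?_
    · exact (Finset.card_filter_le _ _).trans (Finset.card_product A B).le
    · exact Nat.mul_le_mul_right _ (card_le_of_subset_TT hF hF0 _ fun q hq =>
        (Finset.mem_filter.1 hq).2)
  · refine (Finset.sum_le_card_nsmul _ _ (F.totalDegree * (A.card + B.card)) fun q hq =>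
      card_grid_fiber_le F (Finset.mem_filter.1 hq).2 A B).trans ?_
    refine (Nat.mul_le_mul_right _ ((Finset.card_filter_le _ _).trans
      (card_grid_inter_le hT C D₀))).trans (le_of_eq ?_)
    ring

/-- The polynomial with the two pairs of variables interchanged. -/
def swapPairs : MvPolynomial (Fin 4) ℂ ≃ₐ[ℂ] MvPolynomial (Fin 4) ℂ :=
  renameEquiv ℂ (Equiv.addRight (2 : Fin 4))

lemma ev4_swapPairs (F : MvPolynomial (Fin 4) ℂ) (x y s t : ℂ) :
    ev4 (swapPairs F) x y s t = ev4 F s t x y := by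
  simp only [swapPairs, renameEquiv_apply, eval_rename, ev4]
  congr 2
  ext i
  fin_cases i <;> rfl

lemma pderiv_zero_swapPairs (F : MvPolynomial (Fin 4) ℂ) :
    pderiv 0 (swapPairs F) = swapPairs (pderiv 2 F) := by
  simp only [swapPairs, renameEquiv_apply]
  exact pderiv_rename (Equiv.addRight (2 : Fin 4)).injective 2 F

end Counting

/-- **Lemma 2.5.** With `Π := (A×B)\𝒮'` and `Γ := {γ_{c,d} : (c,d) ∈ (C×D₀)\𝒯'}`, the number
of points of `Z(F)` in `A×B×C×D₀` is at most the number of incidences `I(Π,Γ)` plus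
`c·(|A||B| + |C||D₀| + |A||C| + |A||D₀| + |B||C| + |B||D₀|)`, with `c` depending only
(polynomially) on `δ` and `D`. -/
theorem zeros_le_incidences_plus_error (δ D : ℕ) :
    ∃ c : ℝ, 0 < c ∧ ∀ F : MvPolynomial (Fin 4) ℂ,
      Irreducible F → F.totalDegree = δ → (∀ i : Fin 4, pderiv i F ≠ 0) →
      ∀ T' S' : Set (ℂ × ℂ), TT F ⊆ T' → SS F ⊆ S' →
        IsCurvePlusPoints T' D (δ ^ 2) → IsCurvePlusPoints S' D (δ ^ 2) →
      ∀ A B C D₀ : Finset ℂ,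
        ((((A ×ˢ B ×ˢ C ×ˢ D₀).filter fun q : ℂ × ℂ × ℂ × ℂ =>
            ev4 F q.1 q.2.1 q.2.2.1 q.2.2.2 = 0).card : ℝ) ≤
          ((∑ q ∈ (C ×ˢ D₀).filter (fun q : ℂ × ℂ => q ∉ T'),
              ((A ×ˢ B).filter fun p : ℂ × ℂ => p ∉ S' ∧ ev4 F p.1 p.2 q.1 q.2 = 0).card : ℕ) : ℝ)
          + c * ((A.card : ℝ) * B.card + (C.card : ℝ) * D₀.card + (A.card : ℝ) * C.card
              + (A.card : ℝ) * D₀.card + (B.card : ℝ) * C.card + (B.card : ℝ) * D₀.card)) := by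
  let K : ℕ := δ * (δ + 2 * δ * δ) ^ 2 + (D + δ ^ 2) * δ
  refine ⟨2 * K + 1, by positivity, ?_⟩
  intro F hF hδ hder T' S' _ _ hT hS A B C D₀
  have hT1 := sum_card_exceptional_le hF (hder 0) hT A B C D₀
  have hS1 := sum_card_exceptional_le (F := swapPairs F)
    ((MulEquiv.irreducible_iff swapPairs).2 hF)
    (by rw [pderiv_zero_swapPairs]; simpa using hder 2) hS C D₀ A B
  have hdeg : (swapPairs F).totalDegree = F.totalDegree := totalDegree_renameEquiv _ _
  simp only [ev4_swapPairs, hdeg] at hS1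
  rw [hδ] at hT1 hS1
  let N : ℂ × ℂ → ℕ := fun q => ((A ×ˢ B).filter fun p => ev4 F p.1 p.2 q.1 q.2 = 0).card
  let I : ℂ × ℂ → ℕ := fun q =>
    ((A ×ˢ B).filter fun p => p ∉ S' ∧ ev4 F p.1 p.2 q.1 q.2 = 0).card
  let E : ℂ × ℂ → ℕ := fun q =>
    (((A ×ˢ B).filter fun p => p ∈ S').filter fun p => ev4 F p.1 p.2 q.1 q.2 = 0).card
  have hfib : ((A ×ˢ B ×ˢ C ×ˢ D₀).filter fun q : ℂ × ℂ × ℂ × ℂ =>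
        ev4 F q.1 q.2.1 q.2.2.1 q.2.2.2 = 0).card = ∑ q ∈ C ×ˢ D₀, N q := by
    have h := Finset.sum_comm (s := A ×ˢ B) (t := C ×ˢ D₀)
      (f := fun p q => if ev4 F p.1 p.2 q.1 q.2 = 0 then 1 else 0)
    simp only [N, Finset.card_filter, Finset.sum_product] at h ⊢
    exact h
  have hNE : ∀ q, N q ≤ I q + E q := fun q => by
    refine le_trans (Finset.card_le_card fun p hp => ?_) (Finset.card_union_le _ _)
    simp only [Finset.mem_filter, Finset.mem_union] at hp ⊢
    tauto
  have hE : ∑ q ∈ C ×ˢ D₀, E q = ∑ p ∈ (A ×ˢ B).filter (fun p => p ∈ S'),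
      ((C ×ˢ D₀).filter fun q => ev4 F p.1 p.2 q.1 q.2 = 0).card := by
    simp only [E, Finset.card_filter (fun p : ℂ × ℂ => ev4 F _ _ _ _ = 0)]
    exact Finset.sum_comm
  have hsplit : ∑ q ∈ C ×ˢ D₀, N q ≤ ∑ q ∈ (C ×ˢ D₀).filter (fun q => q ∉ T'), I q +
      (∑ q ∈ (C ×ˢ D₀).filter (fun q => q ∈ T'), N q + ∑ q ∈ C ×ˢ D₀, E q) := by
    rw [← Finset.sum_filter_add_sum_filter_not (C ×ˢ D₀) (fun q => q ∈ T') N]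
    have h1 : ∑ q ∈ (C ×ˢ D₀).filter (fun q => q ∉ T'), N q ≤
        ∑ q ∈ (C ×ˢ D₀).filter (fun q => q ∉ T'), I q +
          ∑ q ∈ (C ×ˢ D₀).filter (fun q => q ∉ T'), E q := by
      rw [← Finset.sum_add_distrib]
      exact Finset.sum_le_sum fun q _ => hNE q
    have h2 : ∑ q ∈ (C ×ˢ D₀).filter (fun q => q ∉ T'), E q ≤ ∑ q ∈ C ×ˢ D₀, E q :=
      Finset.sum_le_sum_of_subset (Finset.filter_subset _ _)
    omega
  rw [hE] at hsplit
  rw [hfib]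
  have key : ∑ q ∈ C ×ˢ D₀, N q ≤ ∑ q ∈ (C ×ˢ D₀).filter (fun q => q ∉ T'), I q +
      (2 * K + 1) * (A.card * B.card + C.card * D₀.card + A.card * C.card + A.card * D₀.card +
        B.card * C.card + B.card * D₀.card) := by
    refine hsplit.trans (Nat.add_le_add_left ((Nat.add_le_add hT1 hS1).trans ?_) _)
    simp only [K]
    generalize δ * (δ + 2 * δ * δ) ^ 2 = k₁
    generalize (D + δ ^ 2) * δ = k₂
    generalize A.card = a, B.card = b, C.card = c, D₀.card = d
    have hrest : 0 ≤ k₂ * (a * b) + k₂ * (c * d) + 2 * k₁ * ((a + b) * (c + d)) +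
      k₁ * (a * b + c * d) + k₂ * (a * b + c * d) + (a * b + c * d + (a + b) * (c + d)) :=
      Nat.zero_le _
    nlinarith [hrest]
  exact_mod_cast key
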